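/- Suppose components i ≠ j of W are p-transversal at a point. If α,β ∈ A¹ satisfy α∧β = 0 in A²_{W,k}, then α_i·β_j − α_j·β_i = 0 in k. -/

import Mathlib

/-!
The proof tests the `P`-component of `α ∧ β` against a linear functional attached to a branch
`δ₀` at a transversal point `P`. The alternating form `(x, y) ↦ x(δ₀) · Σ y - (Σ x) · y(δ₀)` sends
`ψ^δ ∧ ψ^δ'` to `[δ = δ₀] - [δ' = δ₀]`, hence kills every cyclic sum; when `P` lies on at least two
components these cyclic sums span `I_P`, so the form descends to `Λ²A_P / I_P`. Evaluated on
`α ∧ β = 0` it yields `Σ_δ' μ(δ₀, δ') (α_{φ δ₀} β_{φ δ'} - α_{φ δ'} β_{φ δ₀}) = 0`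
(`WeakComb.branch_relation`). If only the components `i` and `j` pass through `P` and
`φ δ₀ = i`, the left side is `μ(δ₀, j) (α_i β_j - α_j β_i)`, and `μ(δ₀, j)` is invertible for a
suitable branch `δ₀`.
-/

open scoped Classical

/-- The weak combinatorial type of a plane projective curve. -/
structure WeakComb (p : ℕ) where
  /-- the set of irreducible components -/
  C : Type
  [fintypeC : Fintype C]
  [decEqC : DecidableEq C]
  [nonemptyC : Nonempty C]
  /-- the set of singular points -/
  S : Type
  [fintypeS : Fintype S]
  [decEqS : DecidableEq S]
  /-- the local branches at each singular point -/
  Δ : S → Type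
  [fintypeΔ : ∀ P, Fintype (Δ P)]
  [decEqΔ : ∀ P, DecidableEq (Δ P)]
  /-- each branch belongs to a component -/
  φ : ∀ P, Δ P → C
  /-- local intersection multiplicities of pairs of branches -/
  μ : ∀ P, Δ P → Δ P → ℕ
  μ_symm : ∀ P δ δ', φ P δ ≠ φ P δ' → μ P δ δ' = μ P δ' δ
  μ_pos : ∀ P δ δ', φ P δ ≠ φ P δ' → 0 < μ P δ δ'

attribute [instance] WeakComb.fintypeC WeakComb.decEqC WeakComb.nonemptyC
attribute [instance] WeakComb.fintypeS WeakComb.decEqS WeakComb.fintypeΔ WeakComb.decEqΔ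

namespace WeakComb

variable {p : ℕ} (W : WeakComb p)

/-- μ_P(δ,δ') with the convention that it vanishes on pairs of branches of the same component. -/
def muk (P : W.S) (δ δ' : W.Δ P) : ℕ :=
  if W.φ P δ = W.φ P δ' then 0 else W.μ P δ δ'

/-- μ_P(δ, j): the multiplicity of intersection of the branch δ with the component j. -/
def muC (P : W.S) (δ : W.Δ P) (j : W.C) : ℕ :=
  ∑ δ' : W.Δ P, if W.φ P δ' = j then W.muk P δ δ' else 0

/-- A degree assignment: positive degrees satisfying the Bezout condition. -/
def IsDegree (d : W.C → ℕ) : Prop :=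
  (∀ i, 0 < d i) ∧
  ∀ i j, i ≠ j →
    d i * d j = ∑ P : W.S, ∑ δ : W.Δ P, if W.φ P δ = i then W.muC P δ j else 0

/-- The basis vector σ_i of A¹ = (C → ZMod p). -/
noncomputable def sigma (i : W.C) : W.C → ZMod p := Pi.single i 1

/-- The basis vector ψ_P^δ of A_P = (Δ_P → ZMod p). -/
noncomputable def psi (P : W.S) (δ : W.Δ P) : W.Δ P → ZMod p := Pi.single δ 1

/-- ψ_P^δ ∧ ψ_P^δ' as an element of Λ² A_P. -/
noncomputable def psiW (P : W.S) (δ δ' : W.Δ P) : ⋀[ZMod p]^2 (W.Δ P → ZMod p) :=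
  ⟨ExteriorAlgebra.ιMulti (ZMod p) 2 ![W.psi P δ, W.psi P δ'],
   ExteriorAlgebra.ιMulti_range (ZMod p) 2 (Set.mem_range_self _)⟩

/-- The subspace I_P of Λ² A_P. -/
noncomputable def IP (P : W.S) : Submodule (ZMod p) (⋀[ZMod p]^2 (W.Δ P → ZMod p)) :=
  Submodule.span (ZMod p)
    ({x | ∃ δ1 δ2 δ3 : W.Δ P, x = W.psiW P δ1 δ2 + W.psiW P δ2 δ3 + W.psiW P δ3 δ1} ∪
     {x | (∀ δ δ' : W.Δ P, W.φ P δ = W.φ P δ') ∧ ∃ δ1 δ2 : W.Δ P, x = W.psiW P δ1 δ2})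

/-- The degree-two part A² = A^{2,0} ⊕ A^{2,∞} of the Combinatorial Aomoto algebra. -/
abbrev A2 (d : W.C → ℕ) : Type :=
  ((P : W.S) → (⋀[ZMod p]^2 (W.Δ P → ZMod p)) ⧸ W.IP P) ×
  ({i : W.C // p ∣ d i} → ZMod p)

/-- The wedge product A¹ × A¹ → A², extending σ_i ∧ σ_j bilinearly. -/
noncomputable def wedge (d : W.C → ℕ) (α β : W.C → ZMod p) : W.A2 d :=
  (fun P => ∑ δ : W.Δ P, ∑ δ' : W.Δ P,
      (α (W.φ P δ) * β (W.φ P δ') * (W.muk P δ δ' : ZMod p)) •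
        Submodule.Quotient.mk (W.psiW P δ δ'),
   fun i => α i.1 * (∑ j : W.C, (d j : ZMod p) * β j)
          - β i.1 * (∑ j : W.C, (d j : ZMod p) * α j))

/-- The linear map ·∧α : A¹ → A², β ↦ β ∧ α. -/
noncomputable def wedgeL (d : W.C → ℕ) (α : W.C → ZMod p) :
    (W.C → ZMod p) →ₗ[ZMod p] W.A2 d where
  toFun β := W.wedge d β α
  map_add' β γ := by
    refine Prod.ext ?_ ?_
    · funext P
      simp only [wedge, Pi.add_apply, Prod.fst_add]
      rw [← Finset.sum_add_distrib]
      refine Finset.sum_congr rfl fun δ _ => ?_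
      rw [← Finset.sum_add_distrib]
      refine Finset.sum_congr rfl fun δ' _ => ?_
      rw [← add_smul, add_mul, add_mul]
    · funext i
      simp only [wedge, Pi.add_apply, Prod.snd_add]
      rw [show (∑ x : W.C, (d x : ZMod p) * (β x + γ x))
            = (∑ x : W.C, (d x : ZMod p) * β x) + ∑ x : W.C, (d x : ZMod p) * γ x by
        rw [← Finset.sum_add_distrib]; exact Finset.sum_congr rfl fun x _ => by ring]
      ring
  map_smul' c β := by
    refine Prod.ext ?_ ?_
    · funext P
      simp only [wedge, Pi.smul_apply, smul_eq_mul, RingHom.id_apply, Prod.smul_fst]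
      rw [Finset.smul_sum]
      refine Finset.sum_congr rfl fun δ _ => ?_
      rw [Finset.smul_sum]
      refine Finset.sum_congr rfl fun δ' _ => ?_
      rw [smul_smul]
      ring_nf
    · funext i
      simp only [wedge, Pi.smul_apply, smul_eq_mul, RingHom.id_apply, Prod.smul_snd]
      rw [show (∑ x : W.C, (d x : ZMod p) * (c * β x)) = c * ∑ x : W.C, (d x : ZMod p) * β x by
        rw [Finset.mul_sum]; exact Finset.sum_congr rfl fun x _ => by ring]
      ring

/-- The kernel of ·∧α : A¹ → A². -/
noncomputable def wedgeKer (d : W.C → ℕ) (α : W.C → ZMod p) :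
    Submodule (ZMod p) (W.C → ZMod p) :=
  LinearMap.ker (W.wedgeL d α)

/-- H¹ of the Combinatorial Aomoto complex with differential ·∧α. -/
noncomputable abbrev H1 (d : W.C → ℕ) (α : W.C → ZMod p) :=
  (W.wedgeKer d α) ⧸
    (Submodule.comap (W.wedgeKer d α).subtype (Submodule.span (ZMod p) {α}))

end WeakComb

namespace WeakComb

variable {p : ℕ} (W : WeakComb p)

/-- The resonance condition for (α,β) at the branch δ of the point P. -/
def ResCond (α β : W.C → ZMod p) (P : W.S) (δ : W.Δ P) : Prop :=
  β (W.φ P δ) * (∑ j : W.C, (W.muC P δ j : ZMod p) * α j)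
    - α (W.φ P δ) * (∑ j : W.C, (W.muC P δ j : ZMod p) * β j) = 0

/-- P is a p-transversal point for the pair of components i ≠ j. -/
def PTransPoint (P : W.S) (i j : W.C) : Prop :=
  i ≠ j ∧ (∀ δ : W.Δ P, W.φ P δ = i ∨ W.φ P δ = j) ∧
  (∃ δ : W.Δ P, W.φ P δ = i) ∧ (∃ δ : W.Δ P, W.φ P δ = j) ∧
  ((∃ δ : W.Δ P, W.φ P δ = i ∧ ((W.muC P δ j : ZMod p) ≠ 0)) ∨
   (∃ δ : W.Δ P, W.φ P δ = j ∧ ((W.muC P δ i : ZMod p) ≠ 0)))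

/-- The components i and j are p-transversal at a point. -/
def PTransComponents (i j : W.C) : Prop := ∃ P : W.S, W.PTransPoint P i j

/-- α is non-coordinate if all its coordinates are nonzero. -/
def NonCoordinate (α : W.C → ZMod p) : Prop := ∀ i, α i ≠ 0

end WeakComb

/-- The setoid (partition) obtained from s by merging the classes of c₀ and c₁. -/
def mergeSetoid {α : Type*} (s : Setoid α) (c₀ c₁ : α) : Setoid α :=
  Relation.EqvGen.setoid (fun a b => s.r a b ∨ (a = c₀ ∧ b = c₁))

namespace WeakComb

variable {p : ℕ} (W : WeakComb p)

/-- W is p-transversal at P with respect to (α, π), where the surjection π is encoded by the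
setoid s of its fibres; the two classes π(φ_P(Δ_P)) = {i',j'} are those of c₀ and c₁. -/
def PTransversalAt (α : W.C → ZMod p) (s : Setoid W.C) (P : W.S) (c₀ c₁ : W.C) : Prop :=
  ¬ s.r c₀ c₁ ∧
  (∀ δ : W.Δ P, s.r (W.φ P δ) c₀ ∨ s.r (W.φ P δ) c₁) ∧
  (∃ δ : W.Δ P, s.r (W.φ P δ) c₀) ∧ (∃ δ : W.Δ P, s.r (W.φ P δ) c₁) ∧
  ∃ δ : W.Δ P, s.r (W.φ P δ) c₀ ∧
    (∑ δ' : W.Δ P, if s.r (W.φ P δ') c₁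
        then (W.muk P δ δ' : ZMod p) * α (W.φ P δ') else 0) ≠ 0

/-- A p-reduction step with respect to α. -/
def RedStep (α : W.C → ZMod p) (s s' : Setoid W.C) : Prop :=
  ∃ (P : W.S) (c₀ c₁ : W.C), W.PTransversalAt α s P c₀ c₁ ∧ s' = mergeSetoid s c₀ c₁

/-- W is completely p-reductive with respect to α: starting from the identity partition (⊥),
some finite sequence of p-reduction steps reaches the one-class partition (⊤). -/
def CompletelyPReductive (α : W.C → ZMod p) : Prop :=
  Relation.ReflTransGen (W.RedStep α) ⊥ ⊤

/-- β is π-proportional to α, for the surjection π encoded by the setoid s: on each class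
of s, β is a scalar multiple of α. -/
def Proportional (s : Setoid W.C) (α β : W.C → ZMod p) : Prop :=
  ∀ c : W.C, ∃ l : ZMod p, ∀ c', s.r c c' → β c' = l * α c'

end WeakComb

/-- A combinatorial quasi-fiber structure of rank r on W. -/
structure QuasiFiber {p : ℕ} (W : WeakComb p) (r : ℕ) where
  /-- which quasi-fiber each component belongs to -/
  g : W.C → Fin r
  g_surj : Function.Surjective g
  /-- multiplicities of components inside the quasi-fibers -/
  m : W.C → ℕ
  m_pos : ∀ c, 0 < m c
  /-- the set of base points -/
  B : Set W.S
  fiber_off_base : ∀ P : W.S, P ∉ B → ∀ δ δ' : W.Δ P, g (W.φ P δ) = g (W.φ P δ')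

namespace WeakComb

variable {p : ℕ} (W : WeakComb p) {r : ℕ}

/-- M_s(δ) for a branch δ at a base point P. -/
noncomputable def Mcoef (F : QuasiFiber W r) (P : W.S) (δ : W.Δ P) (s : Fin r) : ZMod p :=
  ∑ δ' : W.Δ P,
    if W.φ P δ' ≠ W.φ P δ ∧ F.g (W.φ P δ') = s
      then ((F.m (W.φ P δ') * W.μ P δ δ' : ℕ) : ZMod p) else 0

/-- ω_a = Σ_c m_c · a_{g(c)} · σ_c ∈ A¹. -/
noncomputable def omega (F : QuasiFiber W r) (a : Fin r → ZMod p) : W.C → ZMod p :=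
  fun c => (F.m c : ZMod p) * a (F.g c)

/-- The restricted combinatorics W°_s of the quasi-fiber s. -/
noncomputable def restrict (F : QuasiFiber W r) (s : Fin r) : WeakComb p where
  C := {c : W.C // F.g c = s}
  fintypeC := Fintype.ofFinite _
  decEqC := inferInstance
  nonemptyC := by obtain ⟨c, hc⟩ := F.g_surj s; exact ⟨⟨c, hc⟩⟩
  S := {P : W.S // Nonempty (W.Δ P) ∧ ∀ δ : W.Δ P, F.g (W.φ P δ) = s}
  fintypeS := Fintype.ofFinite _
  decEqS := inferInstance
  Δ := fun P => W.Δ P.1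
  fintypeΔ := fun P => inferInstance
  decEqΔ := fun P => inferInstance
  φ := fun P δ => ⟨W.φ P.1 δ, P.2.2 δ⟩
  μ := fun P δ δ' => W.μ P.1 δ δ'
  μ_symm := fun P δ δ' h => W.μ_symm P.1 δ δ' (fun e => h (Subtype.ext e))
  μ_pos := fun P δ δ' h => W.μ_pos P.1 δ δ' (fun e => h (Subtype.ext e))

/-- The restriction ω_a|_s of ω_a to the restricted combinatorics W°_s. -/
noncomputable def omegaRes (F : QuasiFiber W r) (a : Fin r → ZMod p) (s : Fin r) :
    (W.restrict F s).C → ZMod p :=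
  fun c => (F.m c.1 : ZMod p) * a s

end WeakComb

namespace WeakComb

variable {p : ℕ} (W : WeakComb p)

/-- The linear functional on `Λ²A_P` induced by the alternating form
`(x, y) ↦ x(δ₀) · Σ y - (Σ x) · y(δ₀)`, written as a `2 × 2` determinant. -/
noncomputable def branchForm (P : W.S) (δ₀ : W.Δ P) :
    ⋀[ZMod p]^2 (W.Δ P → ZMod p) →ₗ[ZMod p] ZMod p :=
  exteriorPower.alternatingMapLinearEquiv
    ((Matrix.detRowAlternating (R := ZMod p) (n := Fin 2)).compLinearMap
      (LinearMap.pi ![LinearMap.proj δ₀, ∑ δ : W.Δ P, LinearMap.proj δ]))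

theorem branchForm_psiW (P : W.S) (δ₀ δ δ' : W.Δ P) :
    W.branchForm P δ₀ (W.psiW P δ δ') =
      (if δ = δ₀ then 1 else 0) - (if δ' = δ₀ then 1 else 0) := by
  have hψ : W.psiW P δ δ' =
      exteriorPower.ιMulti (ZMod p) 2 ![W.psi P δ, W.psi P δ'] := rfl
  rw [hψ, branchForm, exteriorPower.alternatingMapLinearEquiv_apply_ιMulti,
    AlternatingMap.compLinearMap_apply]
  refine (Matrix.det_fin_two _).trans ?_
  simp [psi, Pi.single_apply, eq_comm]

/-- The second family of generators of `I_P` is empty as soon as two branches at `P` lie on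
different components, so that only the cyclic sums have to be killed. -/
theorem branchForm_eq_zero_of_mem_IP (P : W.S) (δ₀ δ₁ δ₂ : W.Δ P)
    (hne : W.φ P δ₁ ≠ W.φ P δ₂) {x : ⋀[ZMod p]^2 (W.Δ P → ZMod p)} (hx : x ∈ W.IP P) :
    W.branchForm P δ₀ x = 0 := by
  suffices hle : W.IP P ≤ LinearMap.ker (W.branchForm P δ₀) from hle hx
  refine Submodule.span_le.2 ?_
  rintro _ (⟨a, b, c, rfl⟩ | ⟨hφ, -⟩)
  · rw [SetLike.mem_coe, LinearMap.mem_ker, map_add, map_add, branchForm_psiW, branchForm_psiW,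
      branchForm_psiW]
    ring
  · exact absurd (hφ δ₁ δ₂) hne

theorem muk_comm (P : W.S) (δ δ' : W.Δ P) : W.muk P δ δ' = W.muk P δ' δ := by
  unfold muk
  by_cases hφ : W.φ P δ = W.φ P δ'
  · rw [if_pos hφ, if_pos hφ.symm]
  · have hsymm := W.μ_symm P δ δ' hφ
    rw [if_neg hφ, if_neg (Ne.symm hφ), hsymm]

/-- The local consequence of `α ∧ β = 0` at a branch `δ₀` of a point lying on at least two
components. -/
theorem branch_relation (d : W.C → ℕ) (α β : W.C → ZMod p) (hw : W.wedge d α β = 0)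
    (P : W.S) (δ₀ δ₁ δ₂ : W.Δ P) (hne : W.φ P δ₁ ≠ W.φ P δ₂) :
    ∑ δ : W.Δ P, (W.muk P δ₀ δ : ZMod p) *
      (α (W.φ P δ₀) * β (W.φ P δ) - α (W.φ P δ) * β (W.φ P δ₀)) = 0 := by
  have hP : (∑ δ : W.Δ P, ∑ δ' : W.Δ P,
      (α (W.φ P δ) * β (W.φ P δ') * (W.muk P δ δ' : ZMod p)) • W.psiW P δ δ') ∈ W.IP P := by
    have h1 := congrFun (congrArg Prod.fst hw) P
    rw [← Submodule.Quotient.mk_eq_zero, ← Submodule.mkQ_apply]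
    simp only [map_sum, map_smul]
    exact h1
  have h0 := W.branchForm_eq_zero_of_mem_IP P δ₀ δ₁ δ₂ hne hP
  simp only [map_sum, map_smul, branchForm_psiW, smul_eq_mul, mul_sub, mul_ite, mul_one, mul_zero,
    Finset.sum_sub_distrib, Finset.sum_ite_eq', Finset.mem_univ, if_true] at h0
  rw [Finset.sum_comm] at h0
  simp only [Finset.sum_ite_eq', Finset.mem_univ, if_true] at h0
  rw [← h0, ← Finset.sum_sub_distrib]
  refine Finset.sum_congr rfl fun δ _ => ?_
  rw [W.muk_comm P δ δ₀]
  ring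

/-- If every branch at `P` lies on the component `a` of `δ₀` or on `b`, the relation at `δ₀`
involves the single minor `α_a β_b - α_b β_a`. -/
theorem muC_mul_minor_eq_zero (d : W.C → ℕ) (α β : W.C → ZMod p) (hw : W.wedge d α β = 0)
    (P : W.S) (δ₀ δ₁ : W.Δ P) (a b : W.C) (hab : a ≠ b)
    (hφ : ∀ δ : W.Δ P, W.φ P δ = a ∨ W.φ P δ = b)
    (h₀ : W.φ P δ₀ = a) (h₁ : W.φ P δ₁ = b) :
    (W.muC P δ₀ b : ZMod p) * (α a * β b - α b * β a) = 0 := by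
  rw [← W.branch_relation d α β hw P δ₀ δ₀ δ₁ (by rwa [h₀, h₁]), muC, Nat.cast_sum,
    Finset.sum_mul]
  refine Finset.sum_congr rfl fun δ _ => ?_
  rcases hφ δ with hδ | hδ
  · simp [muk, hδ, h₀, hab]
  · rw [if_pos hδ, hδ, h₀]

end WeakComb

section Statements

open WeakComb

variable {p : ℕ} [Fact p.Prime]

/-- Lemma `ptransversal`. -/
theorem stmt3 (W : WeakComb p) (d : W.C → ℕ) (hd : W.IsDegree d)
    (i j : W.C) (h : W.PTransComponents i j)
    (α β : W.C → ZMod p) (hw : W.wedge d α β = 0) :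
    α i * β j - α j * β i = 0 := by
  obtain ⟨P, hij, hφ, ⟨δi, hδi⟩, ⟨δj, hδj⟩, ⟨δ, hδ, hμ⟩ | ⟨δ, hδ, hμ⟩⟩ := h
  · exact (mul_eq_zero.1
      (W.muC_mul_minor_eq_zero d α β hw P δ δj i j hij hφ hδ hδj)).resolve_left hμ
  · have hminor := (mul_eq_zero.1 (W.muC_mul_minor_eq_zero d α β hw P δ δi j i hij.symm
      (fun δ' => (hφ δ').symm) hδ hδi)).resolve_left hμ
    linear_combination -hminor

end Statements
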